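/- arXiv:1810.12475 — 2 statements merged into one kernel-verified Lean document; each statement's English description precedes it below -/
import Mathlib

section
/- For all integers w, p0, p1, p2, every positive integer ℓ, and every nonnegative integer u, one has G(w,u,ℓ;p0,p1,p2) = 0. -/
open Finset

noncomputable section

/-- The field `ℚ(q)` of rational functions over `ℚ`. -/
abbrev F : Type := RatFunc ℚ

/-- The indeterminate `q`. -/
noncomputable def qq : F := RatFunc.X

/-- The quantum integer `[n]` with base `v`: `(v^n - v^(-n))/(v - v⁻¹)`. -/
noncomputable def qint (v : F) (n : ℤ) : F := (v ^ n - v ^ (-n)) / (v - v⁻¹)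

/-- The quantum factorial `[m]! = [1][2]⋯[m]` with base `v`. -/
noncomputable def qfact (v : F) (m : ℕ) : F := ∏ k ∈ range m, qint v ((k : ℤ) + 1)

/-- The quantum binomial coefficient `C_v(n,d) = [n][n-1]⋯[n-d+1]/[d]!` for `d ≥ 0`,
and `0` for `d < 0`. -/
noncomputable def qbinom (v : F) (n d : ℤ) : F :=
  if d < 0 then 0
  else (∏ k ∈ range d.toNat, qint v (n - (k : ℤ))) / qfact v d.toNat

/-- The function `G(w,u,ℓ;p0,p1,p2)` of [CLW, (5.1)]. -/
noncomputable def G (w : ℤ) (u ℓ : ℕ) (p0 p1 p2 : ℤ) : F :=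
  (-1 : F) ^ w * qq ^ ((u : ℤ) ^ 2 - w * (u : ℤ) + (ℓ : ℤ) * (u : ℤ)) *
  ((∑ c ∈ range (u + 1), ∑ e ∈ range (u + 1 - c), ∑ t ∈ range (ℓ + 1),
      (let r : ℕ := u - c - e;
       if Even ((t : ℤ) + w - (r : ℤ)) then
         qq ^ (-(t : ℤ) * ((ℓ : ℤ) + (u : ℤ) - 1) - (u : ℤ) * ((c : ℤ) + (e : ℤ)) + 2 * (c : ℤ)
               + (r : ℤ) * p0 + 2 * (c : ℤ) * p1 + 2 * (e : ℤ) * p2)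
           * qbinom qq (ℓ : ℤ) (t : ℤ) * qbinom qq (w + (t : ℤ) + p0) (r : ℤ)
           * qbinom (qq ^ 2) ((w + (t : ℤ) - (r : ℤ)) / 2 + p1) (c : ℤ)
           * qbinom (qq ^ 2) ((w + (t : ℤ) - (r : ℤ)) / 2 + p2) (e : ℤ)
       else 0))
  - (∑ c ∈ range (u + 1), ∑ e ∈ range (u + 1 - c), ∑ t ∈ range (ℓ + 1),
      (let r : ℕ := u - c - e;
       if ¬ Even ((t : ℤ) + w - (r : ℤ)) then
         qq ^ (-(t : ℤ) * ((ℓ : ℤ) + (u : ℤ) - 1) - ((u : ℤ) - 1) * ((c : ℤ) + (e : ℤ))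
               + (r : ℤ) * p0 + 2 * (c : ℤ) * p1 + 2 * (e : ℤ) * p2)
           * qbinom qq (ℓ : ℤ) (t : ℤ) * qbinom qq (w + (t : ℤ) + p0) (r : ℤ)
           * qbinom (qq ^ 2) (1 + (w + (t : ℤ) - (r : ℤ) - 1) / 2 + p1) (c : ℤ)
           * qbinom (qq ^ 2) ((w + (t : ℤ) - (r : ℤ) - 1) / 2 + p2) (e : ℤ)
       else 0)))

/-!
Group the summands of `G` by `N = w + t`. The resulting inner sum `g u N` (`layerSum`) satisfies
`g u (N + 1) = -q ^ u * g u N`, so the sum over `t` is a multiple of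
`∑ t, C_q(ℓ,t) (-q ^ (1 - ℓ)) ^ t`, which vanishes by the `q`-binomial theorem.

The relation is proved by induction on `u`. The `q`-Pascal rule expresses the effect of
`p_i ↦ p_i + 1` on `g (u + 1)` through `g u`, so by induction
`g (u + 1) (N + 1) + q ^ (u + 1) * g (u + 1) N` does not depend on `p0, p1, p2`. A symmetry
exchanging the roles of `p1` and `p2` relates `N + 1` to `N`, so it suffices to look at
`N = p0 = p1 = p2 = 0`, where the same recurrences together with the symmetry give the value `0`.
-/

section QuantumBinomial

variable {v : F}

theorem qint_ne_zero (hv₀ : v ≠ 0) (hv : ¬IsOfFinOrder v) (n : ℕ) : qint v (n + 1) ≠ 0 := by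
  have zpow_sub_ne_zero (k : ℕ) : v ^ ((k : ℤ) + 1) - v ^ (-((k : ℤ) + 1)) ≠ 0 := by
    intro h
    refine hv (isOfFinOrder_iff_pow_eq_one.mpr ⟨2 * (k + 1), by omega, ?_⟩)
    rw [← zpow_natCast, show ((2 * (k + 1) : ℕ) : ℤ) = (k + 1) + (k + 1) by push_cast; ring,
      zpow_add₀ hv₀]
    nth_rw 1 [sub_eq_zero.mp h]
    rw [← zpow_add₀ hv₀, neg_add_cancel, zpow_zero]
  exact div_ne_zero (zpow_sub_ne_zero n) (by simpa using zpow_sub_ne_zero 0)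

theorem qfact_succ (v : F) (n : ℕ) : qfact v (n + 1) = qfact v n * qint v (n + 1) :=
  prod_range_succ _ _

theorem qfact_ne_zero (hv₀ : v ≠ 0) (hv : ¬IsOfFinOrder v) (n : ℕ) : qfact v n ≠ 0 :=
  prod_ne_zero_iff.mpr fun k _ => qint_ne_zero hv₀ hv k

theorem qbinom_natCast (v : F) (n : ℤ) (d : ℕ) :
    qbinom v n d = (∏ k ∈ range d, qint v (n - k)) / qfact v d := by
  simp [qbinom]

theorem qbinom_zero_right (v : F) (n : ℤ) : qbinom v n 0 = 1 := by
  simp [qbinom, qfact]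

theorem qbinom_eq_zero_of_lt (v : F) {n d : ℕ} (h : n < d) : qbinom v n d = 0 := by
  rw [qbinom_natCast, prod_eq_zero (mem_range.mpr h) (by simp [qint]), zero_div]

theorem prod_qint_add_one_sub (v : F) (n : ℤ) (d : ℕ) :
    ∏ k ∈ range (d + 1), qint v (n + 1 - k) =
      (∏ k ∈ range d, qint v (n - k)) * qint v (n + 1) := by
  rw [prod_range_succ', Nat.cast_zero, sub_zero]
  congr! 3 with k
  push_cast
  ring

theorem qint_add_one (hv₀ : v ≠ 0) (n d : ℤ) :
    qint v (n + 1) = v ^ (-(d + 1)) * qint v (n - d) + v ^ (n - d) * qint v (d + 1) := by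
  unfold qint
  rw [← mul_div_assoc, ← mul_div_assoc, ← add_div]
  congr 1
  simp only [mul_sub, ← zpow_add₀ hv₀]
  ring_nf

theorem qbinom_add_one_succ (hv₀ : v ≠ 0) (hv : ¬IsOfFinOrder v) (n : ℤ) (d : ℕ) :
    qbinom v (n + 1) (d + 1 : ℕ) =
      v ^ (-((d : ℤ) + 1)) * qbinom v n (d + 1 : ℕ) + v ^ (n - d) * qbinom v n d := by
  have hint := qint_ne_zero hv₀ hv d
  have hfact := qfact_ne_zero hv₀ hv d
  simp only [qbinom_natCast]
  rw [prod_qint_add_one_sub, qint_add_one hv₀ n d, prod_range_succ, qfact_succ]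
  generalize v ^ (-((d : ℤ) + 1)) = a
  generalize v ^ (n - (d : ℤ)) = b
  field_simp

theorem sum_qbinom_mul_pow (hv₀ : v ≠ 0) (hv : ¬IsOfFinOrder v) (n : ℕ) (x : F) :
    ∑ t ∈ range (n + 1), qbinom v n t * x ^ t =
      ∏ k ∈ range n, (1 + v ^ ((n : ℤ) - 1 - 2 * k) * x) := by
  induction n generalizing x with
  | zero => simp [qbinom_zero_right]
  | succ n ih =>
    have pascal (t : ℕ) : qbinom v (n + 1 : ℕ) (t + 1 : ℕ) * x ^ (t + 1) =
        qbinom v n (t + 1 : ℕ) * (v⁻¹ * x) ^ (t + 1) +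
          v ^ (n : ℤ) * x * (qbinom v n t * (v⁻¹ * x) ^ t) := by
      rw [Nat.cast_add_one, qbinom_add_one_succ hv₀ hv, mul_pow, mul_pow, zpow_sub₀ hv₀,
        zpow_neg, ← Nat.cast_add_one, zpow_natCast, zpow_natCast, zpow_natCast, inv_pow, inv_pow]
      ring
    have extend : ∑ t ∈ range (n + 1), qbinom v n t * (v⁻¹ * x) ^ t =
        ∑ t ∈ range (n + 1), qbinom v n (t + 1 : ℕ) * (v⁻¹ * x) ^ (t + 1) + 1 := by
      rw [sum_range_succ' _ n, sum_range_succ _ n, qbinom_eq_zero_of_lt v n.lt_succ_self]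
      simp [qbinom_zero_right]
    calc ∑ t ∈ range (n + 1 + 1), qbinom v (n + 1 : ℕ) t * x ^ t
        = (1 + v ^ (n : ℤ) * x) * ∑ t ∈ range (n + 1), qbinom v n t * (v⁻¹ * x) ^ t := by
          rw [add_mul, one_mul, mul_sum]
          nth_rw 1 [extend]
          rw [sum_range_succ', sum_congr rfl fun t _ => pascal t, sum_add_distrib]
          simp only [Nat.cast_zero, qbinom_zero_right, pow_zero, mul_one]
          ring
      _ = ∏ k ∈ range (n + 1), (1 + v ^ (((n + 1 : ℕ) : ℤ) - 1 - 2 * k) * x) := by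
          rw [ih, prod_range_succ', mul_comm]
          congr! 3 with k
          · rw [← mul_assoc, ← zpow_sub_one₀ hv₀]
            congr 2
            push_cast
            ring
          · rw [Nat.cast_add_one, add_sub_cancel_right, Nat.cast_zero, mul_zero, sub_zero]

/-- For `0 ≤ n + p`, the coefficient of `z ^ d` in the product of the `n + p` factors
`1 + v ^ i * z` with `i = 1 - n, 3 - n, …, n + 2 * p - 1`. The twist
`v ^ (d * p)` of the quantum binomial makes the lower end of the product independent of `p`, so
that increasing `p` appends one factor. -/
def twistedBinom (v : F) (p n : ℤ) (d : ℕ) : F := v ^ (d * p) * qbinom v (n + p) d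

theorem twistedBinom_zero (v : F) (p n : ℤ) : twistedBinom v p n 0 = 1 := by
  simp [twistedBinom, qbinom_zero_right]

theorem twistedBinom_neg (v : F) (n : ℤ) {d : ℕ} (hd : 0 < d) : twistedBinom v (-n) n d = 0 := by
  simpa [twistedBinom] using Or.inr (qbinom_eq_zero_of_lt v hd)

theorem twistedBinom_add_one_succ (hv₀ : v ≠ 0) (hv : ¬IsOfFinOrder v) (p n : ℤ) (d : ℕ) :
    twistedBinom v (p + 1) n (d + 1) =
      twistedBinom v p n (d + 1) + v ^ (n + 2 * p + 1) * twistedBinom v p n d := by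
  unfold twistedBinom
  rw [← add_assoc, qbinom_add_one_succ hv₀ hv, mul_add, ← mul_assoc, ← mul_assoc, ← mul_assoc,
    ← zpow_add₀ hv₀, ← zpow_add₀ hv₀, ← zpow_add₀ hv₀]
  push_cast
  ring_nf

theorem twistedBinom_add_one_right (hv₀ : v ≠ 0) (p n : ℤ) (d : ℕ) :
    twistedBinom v p (n + 1) d = v ^ (-(d : ℤ)) * twistedBinom v (p + 1) n d := by
  unfold twistedBinom
  rw [← mul_assoc, ← zpow_add₀ hv₀]
  ring_nf

end QuantumBinomial

section Antidiagonal

variable {M : Type*} [AddCommMonoid M]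

theorem sum_antidiagonal_succ_eq_add_of_snd {n : ℕ} {f f' g : ℕ × ℕ → M}
    (h₀ : ∀ i, f' (i, 0) = f (i, 0))
    (h : ∀ x ∈ antidiagonal n, f' (x.1, x.2 + 1) = f (x.1, x.2 + 1) + g x) :
    ∑ x ∈ antidiagonal (n + 1), f' x =
      ∑ x ∈ antidiagonal (n + 1), f x + ∑ x ∈ antidiagonal n, g x := by
  rw [Nat.sum_antidiagonal_succ', Nat.sum_antidiagonal_succ', h₀, add_assoc, ← sum_add_distrib]
  exact congrArg _ (sum_congr rfl h)

theorem sum_antidiagonal_succ_eq_add_of_fst {n : ℕ} {f f' g : ℕ × ℕ → M}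
    (h₀ : ∀ j, f' (0, j) = f (0, j))
    (h : ∀ x ∈ antidiagonal n, f' (x.1 + 1, x.2) = f (x.1 + 1, x.2) + g x) :
    ∑ x ∈ antidiagonal (n + 1), f' x =
      ∑ x ∈ antidiagonal (n + 1), f x + ∑ x ∈ antidiagonal n, g x := by
  rw [Nat.sum_antidiagonal_succ, Nat.sum_antidiagonal_succ, h₀, add_assoc, ← sum_add_distrib]
  exact congrArg _ (sum_congr rfl h)

theorem sum_range_sum_range_eq_sum_antidiagonal (u : ℕ) (f : ℕ → ℕ → ℕ → M) :
    ∑ c ∈ range (u + 1), ∑ e ∈ range (u + 1 - c), f c e (u - c - e) =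
      ∑ x ∈ antidiagonal u, ∑ y ∈ antidiagonal x.2, f y.1 y.2 x.1 := by
  simp only [sum_sigma']
  refine sum_nbij' (fun y => ⟨(u - y.1 - y.2, y.1 + y.2), (y.1, y.2)⟩)
    (fun x => ⟨x.2.1, x.2.2⟩) ?_ ?_ ?_ ?_ ?_
  · rintro ⟨c, e⟩
    simp only [mem_sigma, mem_range, HasAntidiagonal.mem_antidiagonal, and_true]
    omega
  · rintro ⟨⟨r, s⟩, c, e⟩
    simp only [mem_sigma, mem_range, HasAntidiagonal.mem_antidiagonal]
    omega
  · simp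
  · rintro ⟨⟨r, s⟩, c, e⟩ h
    simp only [mem_sigma, HasAntidiagonal.mem_antidiagonal] at h
    obtain ⟨rfl, rfl⟩ := h
    simp [Nat.sub_sub]
  · simp

end Antidiagonal

section Indeterminate

theorem qq_ne_zero : qq ≠ 0 := RatFunc.X_ne_zero

theorem not_isOfFinOrder_qq : ¬IsOfFinOrder qq := by
  rw [isOfFinOrder_iff_pow_eq_one]
  rintro ⟨n, hn, h⟩
  have hpoly : (Polynomial.X : Polynomial ℚ) ^ n = 1 :=
    RatFunc.algebraMap_injective ℚ (by simpa [qq, RatFunc.algebraMap_X] using h)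
  have hdeg := congrArg Polynomial.natDegree hpoly
  rw [Polynomial.natDegree_X_pow, Polynomial.natDegree_one] at hdeg
  exact hn.ne' hdeg

theorem qq_sq_ne_zero : qq ^ 2 ≠ 0 := pow_ne_zero 2 qq_ne_zero

theorem not_isOfFinOrder_qq_sq : ¬IsOfFinOrder (qq ^ 2) :=
  fun h => not_isOfFinOrder_qq (h.of_pow two_ne_zero)

theorem qq_sq_zpow (k : ℤ) : (qq ^ 2) ^ k = qq ^ (2 * k) := by
  rw [zpow_mul, zpow_ofNat]

theorem qq_zpow_mul_zpow (a b : ℤ) : qq ^ a * qq ^ b = qq ^ (a + b) :=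
  (zpow_add₀ qq_ne_zero a b).symm

end Indeterminate

section PairSum

/-- The factor of the summand of `G` depending on `c` and `e`, with `M = w + t - r` and without
`q ^ (-u * (c + e))`. The two parities of `M` are treated uniformly: the upper entries are
`⌈M / 2⌉ + p1` and `⌊M / 2⌋ + p2`, and `M % 2` is the difference of the two roundings. -/
def pairTerm (p1 p2 M : ℤ) (c e : ℕ) : F :=
  (-1) ^ M * qq ^ ((2 - M % 2) * c + M % 2 * e) *
    twistedBinom (qq ^ 2) p1 ((M + 1) / 2) c * twistedBinom (qq ^ 2) p2 (M / 2) e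

theorem pairTerm_add_one_right (p1 p2 M : ℤ) (c e : ℕ) :
    pairTerm p1 (p2 + 1) M c (e + 1) =
      pairTerm p1 p2 M c (e + 1) + qq ^ (M + (4 * p2 + 2)) * pairTerm p1 p2 M c e := by
  have hexp : qq ^ ((2 - M % 2) * c + M % 2 * (e + 1 : ℕ)) * qq ^ (2 * (M / 2 + 2 * p2 + 1)) =
      qq ^ (M + (4 * p2 + 2)) * qq ^ ((2 - M % 2) * c + M % 2 * e) := by
    rw [qq_zpow_mul_zpow, qq_zpow_mul_zpow]
    congr 1
    push_cast
    linear_combination Int.emod_add_mul_ediv M 2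
  simp only [pairTerm, twistedBinom_add_one_succ qq_sq_ne_zero not_isOfFinOrder_qq_sq, qq_sq_zpow]
  linear_combination (-1) ^ M * twistedBinom (qq ^ 2) p1 ((M + 1) / 2) c *
    twistedBinom (qq ^ 2) p2 (M / 2) e * hexp

theorem pairTerm_add_one_left (p1 p2 M : ℤ) (c e : ℕ) :
    pairTerm (p1 + 1) p2 M (c + 1) e =
      pairTerm p1 p2 M (c + 1) e + qq ^ (M + (4 * p1 + 4)) * pairTerm p1 p2 M c e := by
  have hceil : 2 * ((M + 1) / 2) = M + M % 2 := by omega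
  have hexp : qq ^ ((2 - M % 2) * (c + 1 : ℕ) + M % 2 * e) *
        qq ^ (2 * ((M + 1) / 2 + 2 * p1 + 1)) =
      qq ^ (M + (4 * p1 + 4)) * qq ^ ((2 - M % 2) * c + M % 2 * e) := by
    rw [qq_zpow_mul_zpow, qq_zpow_mul_zpow]
    congr 1
    push_cast
    linear_combination hceil
  simp only [pairTerm, twistedBinom_add_one_succ qq_sq_ne_zero not_isOfFinOrder_qq_sq, qq_sq_zpow]
  linear_combination (-1) ^ M * twistedBinom (qq ^ 2) p1 ((M + 1) / 2) c *
    twistedBinom (qq ^ 2) p2 (M / 2) e * hexp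

theorem pairTerm_add_one (p1 p2 M : ℤ) (c e : ℕ) :
    pairTerm p1 p2 (M + 1) c e =
      -(qq ^ (-((c + e : ℕ) : ℤ)) * pairTerm p2 (p1 + 1) M e c) := by
  have hceil : (M + 1 + 1) / 2 = M / 2 + 1 := by omega
  have hmod : (M + 1) % 2 = 1 - M % 2 := by omega
  have hexp : qq ^ ((2 - (1 - M % 2)) * c + (1 - M % 2) * e) * qq ^ (2 * -(c : ℤ)) =
      qq ^ (-((c + e : ℕ) : ℤ)) * qq ^ ((2 - M % 2) * e + M % 2 * c) := by
    rw [qq_zpow_mul_zpow, qq_zpow_mul_zpow]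
    congr 1
    push_cast
    ring
  rw [pairTerm, pairTerm, hceil, hmod, twistedBinom_add_one_right qq_sq_ne_zero, qq_sq_zpow,
    zpow_add_one₀ (neg_ne_zero.mpr one_ne_zero)]
  linear_combination -(-1) ^ M * twistedBinom (qq ^ 2) (p1 + 1) (M / 2) c *
    twistedBinom (qq ^ 2) p2 ((M + 1) / 2) e * hexp

/-- The sum of `pairTerm` over the pairs `(c, e)` with `c + e = s`. -/
def pairSum (p1 p2 M : ℤ) (s : ℕ) : F :=
  ∑ x ∈ antidiagonal s, pairTerm p1 p2 M x.1 x.2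

theorem pairSum_zero (p1 p2 M : ℤ) : pairSum p1 p2 M 0 = (-1) ^ M := by
  simp [pairSum, pairTerm, twistedBinom_zero]

theorem pairSum_add_one_right (p1 p2 M : ℤ) (s : ℕ) :
    pairSum p1 (p2 + 1) M (s + 1) =
      pairSum p1 p2 M (s + 1) + qq ^ (M + (4 * p2 + 2)) * pairSum p1 p2 M s := by
  unfold pairSum
  rw [mul_sum]
  exact sum_antidiagonal_succ_eq_add_of_snd (fun _ => by simp [pairTerm, twistedBinom_zero])
    fun x _ => pairTerm_add_one_right p1 p2 M x.1 x.2

theorem pairSum_add_one_left (p1 p2 M : ℤ) (s : ℕ) :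
    pairSum (p1 + 1) p2 M (s + 1) =
      pairSum p1 p2 M (s + 1) + qq ^ (M + (4 * p1 + 4)) * pairSum p1 p2 M s := by
  unfold pairSum
  rw [mul_sum]
  exact sum_antidiagonal_succ_eq_add_of_fst (fun _ => by simp [pairTerm, twistedBinom_zero])
    fun x _ => pairTerm_add_one_left p1 p2 M x.1 x.2

theorem pairSum_add_one (p1 p2 M : ℤ) (s : ℕ) :
    pairSum p1 p2 (M + 1) s = -(qq ^ (-(s : ℤ)) * pairSum p2 (p1 + 1) M s) := by
  unfold pairSum
  rw [mul_sum, ← sum_neg_distrib, ← Nat.sum_antidiagonal_swap]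
  refine sum_congr rfl fun x hx => ?_
  rw [← HasAntidiagonal.mem_antidiagonal.mp hx, add_comm x.1]
  exact pairTerm_add_one p1 p2 M x.2 x.1

theorem pairSum_zero_zero_zero {s : ℕ} (hs : 0 < s) : pairSum 0 0 0 s = 0 := by
  refine sum_eq_zero fun x hx => ?_
  have vanish {d : ℕ} (hd : 0 < d) : twistedBinom (qq ^ 2) 0 0 d = 0 := by
    simpa using twistedBinom_neg (qq ^ 2) 0 hd
  have hx' := HasAntidiagonal.mem_antidiagonal.mp hx
  rcases Nat.eq_zero_or_pos x.1 with h | h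
  · simp [pairTerm, vanish (d := x.2) (by omega)]
  · simp [pairTerm, vanish h]

end PairSum

section LayerSum

/-- The part of `G` with a fixed value `N = w + t`: the sum over `r + s = u`, where `B (N - r) s`
stands for the contribution of the pairs `(c, e)` with `c + e = s`. -/
def layerSum (p0 : ℤ) (B : ℤ → ℕ → F) (u : ℕ) (N : ℤ) : F :=
  ∑ x ∈ antidiagonal u,
    qq ^ (-((u : ℤ) * x.2)) * twistedBinom qq p0 N x.1 * B (N - x.1) x.2

theorem layerSum_succ_of_succ {B B' : ℤ → ℕ → F} {k : ℤ} (h₀ : ∀ M, B' M 0 = B M 0)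
    (h : ∀ M s, B' M (s + 1) = B M (s + 1) + qq ^ (M + k) * B M s) (p0 : ℤ) (u : ℕ) (N : ℤ) :
    layerSum p0 B' (u + 1) N =
      layerSum p0 B (u + 1) N + qq ^ (N + (k - 1 - 2 * u)) * layerSum p0 B u N := by
  unfold layerSum
  rw [mul_sum]
  refine sum_antidiagonal_succ_eq_add_of_snd (fun r => by rw [h₀]) fun ⟨r, s⟩ hrs => ?_
  have hu : r + s = u := HasAntidiagonal.mem_antidiagonal.mp hrs
  have hexp : qq ^ (-(((u + 1 : ℕ) : ℤ) * (s + 1 : ℕ))) * qq ^ (N - r + k) =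
      qq ^ (N + (k - 1 - 2 * u)) * qq ^ (-((u : ℤ) * s)) := by
    rw [qq_zpow_mul_zpow, qq_zpow_mul_zpow, ← hu]
    congr 1
    push_cast
    ring
  rw [h]
  linear_combination twistedBinom qq p0 N r * B (N - r) s * hexp

theorem layerSum_add_one_succ (p0 : ℤ) (B : ℤ → ℕ → F) (u : ℕ) (N : ℤ) :
    layerSum (p0 + 1) B (u + 1) N =
      layerSum p0 B (u + 1) N + qq ^ (N + (2 * p0 + 1 - u)) * layerSum (p0 + 1) B u (N - 1) := by
  unfold layerSum
  rw [mul_sum]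
  refine sum_antidiagonal_succ_eq_add_of_fst
    (fun s => by rw [twistedBinom_zero, twistedBinom_zero]) fun ⟨r, s⟩ hrs => ?_
  have hu : r + s = u := HasAntidiagonal.mem_antidiagonal.mp hrs
  have hshift : twistedBinom qq p0 N r =
      qq ^ (-(r : ℤ)) * twistedBinom qq (p0 + 1) (N - 1) r := by
    simpa using twistedBinom_add_one_right qq_ne_zero p0 (N - 1) r
  have hexp : qq ^ (-(((u + 1 : ℕ) : ℤ) * s)) * (qq ^ (N + 2 * p0 + 1) * qq ^ (-(r : ℤ))) =
      qq ^ (N + (2 * p0 + 1 - u)) * qq ^ (-((u : ℤ) * s)) := by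
    rw [qq_zpow_mul_zpow, qq_zpow_mul_zpow, qq_zpow_mul_zpow, ← hu]
    congr 1
    push_cast
    ring
  have hB : N - ((r + 1 : ℕ) : ℤ) = N - 1 - r := by push_cast; ring
  rw [twistedBinom_add_one_succ qq_ne_zero not_isOfFinOrder_qq, hB]
  linear_combination B (N - 1 - r) s * twistedBinom qq (p0 + 1) (N - 1) r * hexp +
    qq ^ (-(((u + 1 : ℕ) : ℤ) * s)) * qq ^ (N + 2 * p0 + 1) * B (N - 1 - r) s * hshift

theorem layerSum_pairSum_add_one_right (p0 p1 p2 : ℤ) (u : ℕ) (N : ℤ) :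
    layerSum p0 (pairSum p1 (p2 + 1)) (u + 1) N =
      layerSum p0 (pairSum p1 p2) (u + 1) N +
        qq ^ (N + (4 * p2 + 2 - 1 - 2 * u)) * layerSum p0 (pairSum p1 p2) u N :=
  layerSum_succ_of_succ (fun M => by rw [pairSum_zero, pairSum_zero])
    (pairSum_add_one_right p1 p2) p0 u N

theorem layerSum_pairSum_add_one_left (p0 p1 p2 : ℤ) (u : ℕ) (N : ℤ) :
    layerSum p0 (pairSum (p1 + 1) p2) (u + 1) N =
      layerSum p0 (pairSum p1 p2) (u + 1) N +
        qq ^ (N + (4 * p1 + 4 - 1 - 2 * u)) * layerSum p0 (pairSum p1 p2) u N :=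
  layerSum_succ_of_succ (fun M => by rw [pairSum_zero, pairSum_zero])
    (pairSum_add_one_left p1 p2) p0 u N

theorem layerSum_pairSum_add_one (p0 p1 p2 : ℤ) (u : ℕ) (N : ℤ) :
    layerSum p0 (pairSum p1 p2) u (N + 1) =
      -(qq ^ (-(u : ℤ)) * layerSum (p0 + 1) (pairSum p2 (p1 + 1)) u N) := by
  unfold layerSum
  rw [mul_sum, ← sum_neg_distrib]
  refine sum_congr rfl fun x hx => ?_
  have hexp : qq ^ (-(u : ℤ)) = qq ^ (-(x.1 : ℤ)) * qq ^ (-(x.2 : ℤ)) := by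
    rw [qq_zpow_mul_zpow, ← HasAntidiagonal.mem_antidiagonal.mp hx]
    congr 1
    push_cast
    ring
  rw [add_sub_right_comm, pairSum_add_one, twistedBinom_add_one_right qq_ne_zero, hexp]
  ring

theorem layerSum_pairSum_zero {u : ℕ} (hu : 0 < u) : layerSum 0 (pairSum 0 0) u 0 = 0 := by
  refine sum_eq_zero fun x hx => ?_
  have hx' := HasAntidiagonal.mem_antidiagonal.mp hx
  rcases Nat.eq_zero_or_pos x.1 with h | h
  · simp [h, pairSum_zero_zero_zero (s := x.2) (by omega)]
  · have vanish : twistedBinom qq 0 0 x.1 = 0 := by simpa using twistedBinom_neg qq 0 h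
    simp [vanish]

end LayerSum

section AltDiff

/-- The `q`-difference operator whose kernel consists of the geometric progressions with ratio
`-q ^ u`. -/
def qAltDiff (u : ℕ) (g : ℤ → F) (N : ℤ) : F := g (N + 1) + qq ^ (u : ℤ) * g N

theorem qAltDiff_succ_eq_of_eq_add {u : ℕ} {g h x : ℤ → F} {a : ℤ}
    (hx : ∀ N, qAltDiff u x N = 0) (hg : ∀ N, g N = h N + qq ^ (N + a) * x N) :
    qAltDiff (u + 1) g = qAltDiff (u + 1) h := by
  funext N
  have hexp : qq ^ ((u + 1 : ℕ) : ℤ) * qq ^ (N + a) = qq ^ (N + 1 + a) * qq ^ (u : ℤ) := by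
    rw [qq_zpow_mul_zpow, qq_zpow_mul_zpow]
    congr 1
    push_cast
    ring
  have hxN := hx N
  unfold qAltDiff at hxN ⊢
  rw [hg, hg]
  linear_combination qq ^ (N + 1 + a) * hxN + x N * hexp

theorem eq_neg_zpow_pow_mul_of_qAltDiff_eq_zero {u : ℕ} {g : ℤ → F}
    (hg : ∀ N, qAltDiff u g N = 0) (w : ℤ) (t : ℕ) :
    g (w + t) = (-qq ^ (u : ℤ)) ^ t * g w := by
  induction t with
  | zero => simp
  | succ t ih =>
    have step := hg (w + t)
    rw [qAltDiff, ih] at step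
    rw [Nat.cast_add_one, ← add_assoc]
    linear_combination step

theorem qAltDiff_layerSum_add_one (u : ℕ) (N p0 p1 p2 : ℤ) :
    qAltDiff u (layerSum p0 (pairSum p1 p2) u) (N + 1) =
      -(qq ^ (-(u : ℤ)) * qAltDiff u (layerSum (p0 + 1) (pairSum p2 (p1 + 1)) u) N) := by
  rw [qAltDiff, qAltDiff, layerSum_pairSum_add_one p0 p1 p2 u (N + 1),
    layerSum_pairSum_add_one p0 p1 p2 u N]
  ring

theorem qAltDiff_layerSum_zero (N p0 p1 p2 : ℤ) :
    qAltDiff 0 (layerSum p0 (pairSum p1 p2) 0) N = 0 := by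
  simp [qAltDiff, layerSum, twistedBinom_zero, pairSum_zero, zpow_add_one₀]

variable {u : ℕ}

theorem qAltDiff_layerSum_succ_eq
    (hu : ∀ N p0 p1 p2, qAltDiff u (layerSum p0 (pairSum p1 p2) u) N = 0) (p0 p1 p2 : ℤ) :
    qAltDiff (u + 1) (layerSum p0 (pairSum p1 p2) (u + 1)) =
      qAltDiff (u + 1) (layerSum 0 (pairSum 0 0) (u + 1)) := by
  let D (p0 p1 p2 : ℤ) := qAltDiff (u + 1) (layerSum p0 (pairSum p1 p2) (u + 1))
  have periodic_p0 : Function.Periodic (fun p => D p p1 p2) 1 := fun p =>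
    qAltDiff_succ_eq_of_eq_add (x := fun N => layerSum (p + 1) (pairSum p1 p2) u (N - 1))
      (fun N => by simpa [qAltDiff] using hu (N - 1) (p + 1) p1 p2)
      (layerSum_add_one_succ p (pairSum p1 p2) u)
  have periodic_p1 : Function.Periodic (fun p => D 0 p p2) 1 := fun p =>
    qAltDiff_succ_eq_of_eq_add (fun N => hu N 0 p p2) (layerSum_pairSum_add_one_left 0 p p2 u)
  have periodic_p2 : Function.Periodic (fun p => D 0 0 p) 1 := fun p =>
    qAltDiff_succ_eq_of_eq_add (fun N => hu N 0 0 p) (layerSum_pairSum_add_one_right 0 0 p u)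
  calc D p0 p1 p2
      = D 0 p1 p2 := by simpa using periodic_p0.int_mul_eq p0
    _ = D 0 0 p2 := by simpa using periodic_p1.int_mul_eq p1
    _ = D 0 0 0 := by simpa using periodic_p2.int_mul_eq p2

theorem qAltDiff_layerSum_succ_zero
    (hu : ∀ N p0 p1 p2, qAltDiff u (layerSum p0 (pairSum p1 p2) u) N = 0) :
    qAltDiff (u + 1) (layerSum 0 (pairSum 0 0) (u + 1)) 0 = 0 := by
  have h_zero : layerSum 0 (pairSum 0 0) (u + 1) 0 = 0 := layerSum_pairSum_zero u.succ_pos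
  have h_p0 : layerSum 1 (pairSum 0 0) (u + 1) 0 =
      qq ^ (1 - (u : ℤ)) * layerSum 1 (pairSum 0 0) u (-1) := by
    simpa [h_zero] using layerSum_add_one_succ 0 (pairSum 0 0) u 0
  have h_p2 : layerSum 1 (pairSum 0 1) (u + 1) 0 = layerSum 1 (pairSum 0 0) (u + 1) 0 +
      qq ^ (1 - 2 * (u : ℤ)) * layerSum 1 (pairSum 0 0) u 0 := by
    convert layerSum_pairSum_add_one_right 1 0 0 u 0 using 4 <;> ring
  have h_diff : layerSum 1 (pairSum 0 0) u 0 +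
      qq ^ (u : ℤ) * layerSum 1 (pairSum 0 0) u (-1) = 0 := by
    simpa [qAltDiff] using hu (-1) 1 0 0
  have h_one : layerSum 1 (pairSum 0 1) (u + 1) 0 = 0 := by
    have hexp : qq ^ (1 - (u : ℤ)) = qq ^ (1 - 2 * (u : ℤ)) * qq ^ (u : ℤ) := by
      rw [qq_zpow_mul_zpow]
      ring_nf
    rw [h_p2, h_p0, hexp]
    linear_combination qq ^ (1 - 2 * (u : ℤ)) * h_diff
  have h_swap := layerSum_pairSum_add_one 0 0 0 (u + 1) 0
  rw [zero_add (1 : ℤ), h_one] at h_swap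
  rw [qAltDiff, h_zero, zero_add, h_swap]
  ring

end AltDiff

theorem qAltDiff_layerSum_eq_zero (u : ℕ) (N p0 p1 p2 : ℤ) :
    qAltDiff u (layerSum p0 (pairSum p1 p2) u) N = 0 := by
  induction u generalizing N p0 p1 p2 with
  | zero => exact qAltDiff_layerSum_zero N p0 p1 p2
  | succ u ih =>
    have step (N : ℤ) : qAltDiff (u + 1) (layerSum 0 (pairSum 0 0) (u + 1)) (N + 1) =
        -(qq ^ (-((u + 1 : ℕ) : ℤ)) *
          qAltDiff (u + 1) (layerSum 0 (pairSum 0 0) (u + 1)) N) := by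
      rw [qAltDiff_layerSum_add_one, qAltDiff_layerSum_succ_eq ih]
    rw [qAltDiff_layerSum_succ_eq ih]
    induction N using Int.induction_on with
    | zero => exact qAltDiff_layerSum_succ_zero ih
    | succ N ihN => rw [step, ihN, mul_zero, neg_zero]
    | pred N ihN =>
      have hstep := step (-N - 1)
      rw [sub_add_cancel, ihN] at hstep
      simpa [zpow_ne_zero _ qq_ne_zero] using hstep

section OuterSum

theorem pairTerm_of_even {M : ℤ} (hM : Even M) (p1 p2 : ℤ) (c e : ℕ) :
    pairTerm p1 p2 M c e = qq ^ (2 * (c : ℤ) + 2 * c * p1 + 2 * e * p2) *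
      qbinom (qq ^ 2) (M / 2 + p1) c * qbinom (qq ^ 2) (M / 2 + p2) e := by
  have hceil : (M + 1) / 2 = M / 2 := by have := hM.two_dvd; omega
  have hexp : qq ^ (2 * (c : ℤ) + 2 * c * p1 + 2 * e * p2) =
      qq ^ (2 * (c : ℤ)) * (qq ^ (2 * (c * p1)) * qq ^ (2 * (e * p2))) := by
    rw [qq_zpow_mul_zpow, qq_zpow_mul_zpow]
    ring_nf
  rw [pairTerm, twistedBinom, twistedBinom, hceil, Int.even_iff.mp hM, hM.neg_one_zpow,
    qq_sq_zpow, qq_sq_zpow, hexp, sub_zero, zero_mul, add_zero]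
  ring

theorem pairTerm_of_odd {M : ℤ} (hM : Odd M) (p1 p2 : ℤ) (c e : ℕ) :
    pairTerm p1 p2 M c e = -(qq ^ ((c : ℤ) + e + 2 * c * p1 + 2 * e * p2) *
      qbinom (qq ^ 2) (1 + (M - 1) / 2 + p1) c * qbinom (qq ^ 2) ((M - 1) / 2 + p2) e) := by
  have hmod := Int.odd_iff.mp hM
  have hceil : (M + 1) / 2 = 1 + (M - 1) / 2 := by omega
  have hfloor : M / 2 = (M - 1) / 2 := by omega
  have hexp : qq ^ ((c : ℤ) + e + 2 * c * p1 + 2 * e * p2) =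
      qq ^ ((2 - 1) * (c : ℤ) + 1 * e) * (qq ^ (2 * (c * p1)) * qq ^ (2 * (e * p2))) := by
    rw [qq_zpow_mul_zpow, qq_zpow_mul_zpow]
    ring_nf
  rw [pairTerm, twistedBinom, twistedBinom, hceil, hfloor, hmod, hM.neg_one_zpow,
    qq_sq_zpow, qq_sq_zpow, hexp]
  ring

theorem G_summand_eq (w p0 p1 p2 : ℤ) (u ℓ c e r t : ℕ) :
    ((if Even ((t : ℤ) + w - r) then
        qq ^ (-(t : ℤ) * (ℓ + u - 1) - u * (c + e) + 2 * c + r * p0 + 2 * c * p1 + 2 * e * p2) *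
          qbinom qq ℓ t * qbinom qq (w + t + p0) r *
          qbinom (qq ^ 2) ((w + t - r) / 2 + p1) c * qbinom (qq ^ 2) ((w + t - r) / 2 + p2) e
      else 0) -
      if ¬Even ((t : ℤ) + w - r) then
        qq ^ (-(t : ℤ) * (ℓ + u - 1) - (u - 1) * (c + e) + r * p0 + 2 * c * p1 + 2 * e * p2) *
          qbinom qq ℓ t * qbinom qq (w + t + p0) r *
          qbinom (qq ^ 2) (1 + (w + t - r - 1) / 2 + p1) c *
          qbinom (qq ^ 2) ((w + t - r - 1) / 2 + p2) e
      else 0) =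
    qq ^ (-(t : ℤ) * (ℓ + u - 1)) * qbinom qq ℓ t *
      (qq ^ (-((u : ℤ) * (c + e : ℕ))) * twistedBinom qq p0 (w + t) r *
        pairTerm p1 p2 (w + t - r) c e) := by
  have regroup (a k : ℤ) (h : a = -(t : ℤ) * (ℓ + u - 1) - u * (c + e) + r * p0 + k) :
      qq ^ a = qq ^ (-(t : ℤ) * (ℓ + u - 1)) * qq ^ (-((u : ℤ) * (c + e : ℕ))) *
        qq ^ (r * p0) * qq ^ k := by
    rw [qq_zpow_mul_zpow, qq_zpow_mul_zpow, qq_zpow_mul_zpow, h, Nat.cast_add, sub_eq_add_neg]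
  rw [add_comm (t : ℤ) w, twistedBinom]
  by_cases hM : Even (w + t - r)
  · rw [if_pos hM, if_neg (not_not.mpr hM), pairTerm_of_even hM,
      regroup _ (2 * c + 2 * c * p1 + 2 * e * p2) (by ring)]
    ring
  · rw [if_neg hM, if_pos hM, pairTerm_of_odd (Int.not_even_iff_odd.mp hM),
      regroup _ (c + e + 2 * c * p1 + 2 * e * p2) (by ring)]
    ring

theorem G_eq_sum_layerSum (w p0 p1 p2 : ℤ) (u ℓ : ℕ) :
    G w u ℓ p0 p1 p2 = (-1) ^ w * qq ^ ((u : ℤ) ^ 2 - w * u + ℓ * u) *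
      ∑ t ∈ range (ℓ + 1), qq ^ (-(t : ℤ) * (ℓ + u - 1)) * qbinom qq ℓ t *
        layerSum p0 (pairSum p1 p2) u (w + t) := by
  let a (t c e r : ℕ) : F := qq ^ (-(t : ℤ) * (ℓ + u - 1)) * qbinom qq ℓ t *
    (qq ^ (-((u : ℤ) * (c + e : ℕ))) * twistedBinom qq p0 (w + t) r *
      pairTerm p1 p2 (w + t - r) c e)
  have sum_a (t : ℕ) : ∑ c ∈ range (u + 1), ∑ e ∈ range (u + 1 - c), a t c e (u - c - e) =
      qq ^ (-(t : ℤ) * (ℓ + u - 1)) * qbinom qq ℓ t *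
        layerSum p0 (pairSum p1 p2) u (w + t) := by
    rw [sum_range_sum_range_eq_sum_antidiagonal, layerSum, mul_sum]
    refine sum_congr rfl fun x _ => ?_
    rw [pairSum, mul_sum, mul_sum]
    refine sum_congr rfl fun y hy => ?_
    rw [← HasAntidiagonal.mem_antidiagonal.mp hy]
  simp only [G, ← sum_a, ← sum_sub_distrib]
  congr 1
  rw [sum_comm]
  refine sum_congr rfl fun c _ => ?_
  conv_rhs => rw [sum_comm]
  refine sum_congr rfl fun e _ => sum_congr rfl fun t _ => ?_
  exact G_summand_eq w p0 p1 p2 u ℓ c e (u - c - e) t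

theorem sum_qbinom_mul_eq_zero_of_geometric {u n : ℕ} {w : ℤ} {g : ℤ → F}
    (hg : ∀ t : ℕ, g (w + t) = (-qq ^ (u : ℤ)) ^ t * g w) :
    ∑ t ∈ range (n + 1 + 1), qq ^ (-(t : ℤ) * ((n + 1 : ℕ) + u - 1)) * qbinom qq (n + 1 : ℕ) t *
      g (w + t) = 0 := by
  have term (t : ℕ) : qq ^ (-(t : ℤ) * ((n + 1 : ℕ) + u - 1)) * qbinom qq (n + 1 : ℕ) t *
      g (w + t) = qbinom qq (n + 1 : ℕ) t * (-qq ^ (-(n : ℤ))) ^ t * g w := by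
    have hexp : qq ^ (-(t : ℤ) * ((n + 1 : ℕ) + u - 1)) * (-qq ^ (u : ℤ)) ^ t =
        (-qq ^ (-(n : ℤ))) ^ t := by
      rw [neg_pow, neg_pow (qq ^ (-(n : ℤ))), ← zpow_natCast (qq ^ (u : ℤ)),
        ← zpow_natCast (qq ^ (-(n : ℤ))), ← zpow_mul, ← zpow_mul, mul_left_comm, qq_zpow_mul_zpow]
      congr 2
      push_cast
      ring
    rw [hg, ← hexp]
    ring
  rw [sum_congr rfl fun t _ => term t, ← sum_mul,
    sum_qbinom_mul_pow qq_ne_zero not_isOfFinOrder_qq,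
    prod_eq_zero (mem_range.mpr n.succ_pos), zero_mul]
  simp [qq_ne_zero]

end OuterSum

/-- `G(w,u,ℓ;p0,p1,p2) = 0` for all integers `w, p0, p1, p2`, every positive integer `ℓ`,
and every nonnegative integer `u`. -/
theorem G_eq_zero (w p0 p1 p2 : ℤ) (u ℓ : ℕ) (hℓ : 0 < ℓ) :
    G w u ℓ p0 p1 p2 = 0 := by
  obtain ⟨n, rfl⟩ := Nat.exists_eq_add_one.mpr hℓ
  have hgeom (t : ℕ) : layerSum p0 (pairSum p1 p2) u (w + t) =
      (-qq ^ (u : ℤ)) ^ t * layerSum p0 (pairSum p1 p2) u w :=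
    eq_neg_zpow_pow_mul_of_qAltDiff_eq_zero (fun N => qAltDiff_layerSum_eq_zero u N p0 p1 p2) w t
  rw [G_eq_sum_layerSum, sum_qbinom_mul_eq_zero_of_geometric hgeom, mul_zero]

end
end

section
/- Let m ∈ ℤ≥0, λ ∈ ℤ, and y, u, ℓ ∈ ℤ≥0 with ℓ + y + 2u ≤ 2m + 1. Then S′(y,u,ℓ,λ) = −T(2m+3−2λ−2ℓ−4u−y, u, ℓ), where S′(y,u,ℓ,λ) = Σ_{0 ≤ n ≤ 2m, n even} Σ_{c,e,r ≥ 0, c+e+r=u} q^{(u+y−n)(ℓ+u−1)} C_q(ℓ, −u−y−e+c+n) C_q(2m+3−2λ−5u−3ℓ−2y−e+c+n, r) C_{q²}(m−λ−2u−ℓ−y+c+1+n/2, c) C_{q²}(m+1−λ−2ℓ−y−3u+n/2+c, e) − Σ_{1 ≤ n ≤ 2m+1, n odd} Σ_{c,e,r ≥ 0, c+e+r=u} q^{(u+y−n)(ℓ+u−1)+c−e} C_q(ℓ, −u−y−e+c+n) C_q(2m+3−2λ−5u−3ℓ−2y−e+c+n, r) C_{q²}(m−λ−2u−ℓ−y+c+(n+1)/2,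 c) C_{q²}(m+1−λ−2ℓ−y−3u+(n+1)/2+c, e). -/
open Finset

noncomputable section

/-- The function `T(w,u,ℓ)` of [CLW, (3.14)]. -/
noncomputable def T (w : ℤ) (u ℓ : ℕ) : F :=
  (∑ c ∈ range (u + 1), ∑ e ∈ range (u + 1 - c), ∑ t ∈ range (ℓ + 1),
      (let r : ℕ := u - c - e;
       if Even ((t : ℤ) + w - (r : ℤ)) then
         qq ^ (-(t : ℤ) * ((ℓ : ℤ) + (u : ℤ) - 1) + ((ℓ : ℤ) + (u : ℤ)) * ((c : ℤ) - (e : ℤ)))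
           * qbinom qq (ℓ : ℤ) (t : ℤ) * qbinom qq (w + (t : ℤ) - (ℓ : ℤ)) (r : ℤ)
           * qbinom (qq ^ 2) ((u : ℤ) - 1 + (w + (t : ℤ) - (r : ℤ)) / 2) (c : ℤ)
           * qbinom (qq ^ 2) ((w + (t : ℤ) - (r : ℤ)) / 2 - (ℓ : ℤ)) (e : ℤ)
       else 0))
  - (∑ c ∈ range (u + 1), ∑ e ∈ range (u + 1 - c), ∑ t ∈ range (ℓ + 1),
      (let r : ℕ := u - c - e;
       if ¬ Even ((t : ℤ) + w - (r : ℤ)) then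
         qq ^ (-(t : ℤ) * ((ℓ : ℤ) + (u : ℤ) - 1) + ((ℓ : ℤ) + (u : ℤ) - 1) * ((c : ℤ) - (e : ℤ)))
           * qbinom qq (ℓ : ℤ) (t : ℤ) * qbinom qq (w + (t : ℤ) - (ℓ : ℤ)) (r : ℤ)
           * qbinom (qq ^ 2) ((u : ℤ) + (w + (t : ℤ) - (r : ℤ) - 1) / 2) (c : ℤ)
           * qbinom (qq ^ 2) ((w + (t : ℤ) - (r : ℤ) - 1) / 2 - (ℓ : ℤ)) (e : ℤ)
       else 0))

/-- The function `S'(y,u,ℓ,λ)` of [CLW, (A.3)] (depending also on `m`). -/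
noncomputable def Sp (m : ℕ) (lmd : ℤ) (y u ℓ : ℕ) : F :=
  (∑ n ∈ range (2 * m + 2), ∑ c ∈ range (u + 1), ∑ e ∈ range (u + 1 - c),
      (let r : ℕ := u - c - e;
       if Even n then
         qq ^ (((u : ℤ) + (y : ℤ) - (n : ℤ)) * ((ℓ : ℤ) + (u : ℤ) - 1))
           * qbinom qq (ℓ : ℤ) (-(u : ℤ) - (y : ℤ) - (e : ℤ) + (c : ℤ) + (n : ℤ))
           * qbinom qq (2 * (m : ℤ) + 3 - 2 * lmd - 5 * (u : ℤ) - 3 * (ℓ : ℤ) - 2 * (y : ℤ)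
               - (e : ℤ) + (c : ℤ) + (n : ℤ)) (r : ℤ)
           * qbinom (qq ^ 2) ((m : ℤ) - lmd - 2 * (u : ℤ) - (ℓ : ℤ) - (y : ℤ) + (c : ℤ) + 1
               + (n : ℤ) / 2) (c : ℤ)
           * qbinom (qq ^ 2) ((m : ℤ) + 1 - lmd - 2 * (ℓ : ℤ) - (y : ℤ) - 3 * (u : ℤ)
               + (n : ℤ) / 2 + (c : ℤ)) (e : ℤ)
       else 0))
  - (∑ n ∈ range (2 * m + 2), ∑ c ∈ range (u + 1), ∑ e ∈ range (u + 1 - c),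
      (let r : ℕ := u - c - e;
       if ¬ Even n then
         qq ^ (((u : ℤ) + (y : ℤ) - (n : ℤ)) * ((ℓ : ℤ) + (u : ℤ) - 1) + (c : ℤ) - (e : ℤ))
           * qbinom qq (ℓ : ℤ) (-(u : ℤ) - (y : ℤ) - (e : ℤ) + (c : ℤ) + (n : ℤ))
           * qbinom qq (2 * (m : ℤ) + 3 - 2 * lmd - 5 * (u : ℤ) - 3 * (ℓ : ℤ) - 2 * (y : ℤ)
               - (e : ℤ) + (c : ℤ) + (n : ℤ)) (r : ℤ)
           * qbinom (qq ^ 2) ((m : ℤ) - lmd - 2 * (u : ℤ) - (ℓ : ℤ) - (y : ℤ) + (c : ℤ)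
               + ((n : ℤ) + 1) / 2) (c : ℤ)
           * qbinom (qq ^ 2) ((m : ℤ) + 1 - lmd - 2 * (ℓ : ℤ) - (y : ℤ) - 3 * (u : ℤ)
               + ((n : ℤ) + 1) / 2 + (c : ℤ)) (e : ℤ)
       else 0))

/-! Put `x = t + w - r`. Both halves of `T` are one sum over `t` with sign `(-1)^x`, and both halves
of `S'` are one sum over `n` with sign `(-1)^n`; rounding `x / 2` and `n / 2` up or down absorbs the
case distinctions. The substitution `n = t + (u + y + e - c)` makes `n` and `x` differ by an odd
number, whence the global minus sign, and turns each summand of `S'` into one of `T`. As `t` ranges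
over `0, …, ℓ`, outside of which `C_q(ℓ, t)` vanishes, `n` stays below `ℓ + y + 2u + 1`, hence in
the range of summation of `S'`. -/

theorem sum_range_sub_eq_sum_range {M : Type*} [AddCommMonoid M] {g : ℤ → M} {k l N : ℕ}
    (hN : k + l ≤ N) (hg : ∀ t ∉ Set.Ico 0 (l : ℤ), g t = 0) :
    ∑ n ∈ range N, g (n - k) = ∑ t ∈ range l, g t := by
  have hsub : Ico k (k + l) ⊆ range N := fun n hn =>
    mem_range.mpr ((mem_Ico.mp hn).2.trans_le hN)
  rw [← sum_subset hsub fun n _ hn => hg _ fun ht => hn ?_, sum_Ico_eq_sum_range]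
  · simp
  · rw [Set.mem_Ico] at ht
    rw [mem_Ico]
    omega

theorem qbinom_natCast_eq_zero (v : F) {n : ℕ} {d : ℤ} (hd : d ∉ Set.Icc 0 (n : ℤ)) :
    qbinom v n d = 0 := by
  rw [Set.mem_Icc, not_and_or, not_le, not_le] at hd
  obtain hd | hd := hd
  · exact if_pos hd
  · have hprod : ∏ k ∈ range d.toNat, qint v ((n : ℤ) - k) = 0 :=
      prod_eq_zero (mem_range.mpr (by omega : n < d.toNat)) (by simp [qint])
    rw [qbinom, hprod, zero_div, ite_self]

/-- The signed summand of `T(w,u,ℓ)` at `(c, e, r, t)`, with the even and the odd case merged: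
`x % 2` selects the exponent, and rounding `x / 2` up or down the upper entries. -/
def TSummand (w u ℓ c e r t : ℤ) : F :=
  let x := t + w - r
  (-1) ^ x * (qq ^ (-t * (ℓ + u - 1) + (ℓ + u - x % 2) * (c - e))
    * qbinom qq ℓ t * qbinom qq (w + t - ℓ) r
    * qbinom (qq ^ 2) (u - 1 + (x + 1) / 2) c * qbinom (qq ^ 2) (x / 2 - ℓ) e)

/-- The signed summand of `S'(y,u,ℓ,λ)` at `(c, e, r, n)`, with the even and the odd case merged
as in `TSummand`. -/
def SpSummand (m lmd y u ℓ c e r n : ℤ) : F :=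
  (-1) ^ n * (qq ^ ((u + y - n) * (ℓ + u - 1) + n % 2 * (c - e))
    * qbinom qq ℓ (-u - y - e + c + n)
    * qbinom qq (2 * m + 3 - 2 * lmd - 5 * u - 3 * ℓ - 2 * y - e + c + n) r
    * qbinom (qq ^ 2) (m - lmd - 2 * u - ℓ - y + c + 1 + n / 2) c
    * qbinom (qq ^ 2) (m + 1 - lmd - 2 * ℓ - y - 3 * u + (n + 1) / 2 + c) e)

theorem T_eq_sum_TSummand (w : ℤ) (u ℓ : ℕ) :
    T w u ℓ = ∑ c ∈ range (u + 1), ∑ e ∈ range (u + 1 - c), ∑ t ∈ range (ℓ + 1),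
      TSummand w u ℓ c e (u - c - e : ℕ) t := by
  simp only [T, ← sum_sub_distrib]
  refine sum_congr rfl fun c _ => sum_congr rfl fun e _ => sum_congr rfl fun t _ => ?_
  unfold TSummand
  generalize ((u - c - e : ℕ) : ℤ) = r
  obtain hx | hx := Int.even_or_odd ((t : ℤ) + w - r)
  · have hmod : ((t : ℤ) + w - r) % 2 = 0 := Int.even_iff.mp hx
    have hceil : ((t : ℤ) + w - r + 1) / 2 = (t + w - r) / 2 := by omega
    simp only [hx, not_true_eq_false, if_true, if_false, sub_zero, hx.neg_one_zpow, one_mul,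
      hmod, hceil, add_comm w (t : ℤ)]
  · have hmod : ((t : ℤ) + w - r) % 2 = 1 := Int.odd_iff.mp hx
    have hceil : (u : ℤ) - 1 + (t + w - r + 1) / 2 = u + (t + w - r - 1) / 2 := by omega
    have hfloor : ((t : ℤ) + w - r) / 2 = (t + w - r - 1) / 2 := by omega
    simp only [Int.not_even_iff_odd.mpr hx, not_false_eq_true, if_true, if_false, zero_sub,
      hx.neg_one_zpow, neg_one_mul, hmod, hceil, hfloor, add_comm w (t : ℤ)]

theorem Sp_eq_sum_SpSummand (m : ℕ) (lmd : ℤ) (y u ℓ : ℕ) :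
    Sp m lmd y u ℓ = ∑ c ∈ range (u + 1), ∑ e ∈ range (u + 1 - c), ∑ n ∈ range (2 * m + 2),
      SpSummand m lmd y u ℓ c e (u - c - e : ℕ) n := by
  simp only [Sp, ← sum_sub_distrib]
  rw [sum_comm]
  refine sum_congr rfl fun c _ => ?_
  rw [sum_comm]
  refine sum_congr rfl fun e _ => sum_congr rfl fun n _ => ?_
  unfold SpSummand
  obtain hn | hn := Nat.even_or_odd n
  · have hn' : Even (n : ℤ) := (Int.even_coe_nat n).mpr hn
    have hmod : (n : ℤ) % 2 = 0 := Int.even_iff.mp hn'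
    have hceil : ((n : ℤ) + 1) / 2 = n / 2 := by omega
    simp only [hn, not_true_eq_false, if_true, if_false, sub_zero, hn'.neg_one_zpow, one_mul,
      hmod, zero_mul, add_zero, hceil]
  · have hn' : Odd (n : ℤ) := (Int.odd_coe_nat n).mpr hn
    have hmod : (n : ℤ) % 2 = 1 := Int.odd_iff.mp hn'
    have hfloor : ((n : ℤ) + 1) / 2 = 1 + n / 2 := by omega
    simp only [Nat.not_even_iff_odd.mpr hn, not_false_eq_true, if_true, if_false, zero_sub,
      hn'.neg_one_zpow, neg_one_mul, hmod, one_mul, hfloor, add_sub_assoc, add_assoc]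

theorem TSummand_eq_zero (w u c e r : ℤ) {ℓ : ℕ} {t : ℤ} (ht : t ∉ Set.Icc 0 (ℓ : ℤ)) :
    TSummand w u ℓ c e r t = 0 := by
  simp only [TSummand, qbinom_natCast_eq_zero qq ht, mul_zero, zero_mul]

theorem SpSummand_eq_neg_TSummand (m lmd y ℓ n : ℤ) {u c e r : ℤ} (hu : c + e + r = u) :
    SpSummand m lmd y u ℓ c e r n =
      -TSummand (2 * m + 3 - 2 * lmd - 2 * ℓ - 4 * u - y) u ℓ c e r (n - (u + y + e - c)) := by
  set w := 2 * m + 3 - 2 * lmd - 2 * ℓ - 4 * u - y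
  set t := n - (u + y + e - c)
  have hx : t + w - r = n + (2 * (m + 1 - lmd - ℓ - 3 * u - y + c) + 1) := by omega
  have hsign : (-1 : F) ^ (t + w - r) = -(-1) ^ n := by
    rw [hx, zpow_add₀ (by norm_num), (odd_two_mul_add_one _).neg_one_zpow, mul_neg_one]
  have hexp : (u + y - n) * (ℓ + u - 1) + n % 2 * (c - e) =
      -t * (ℓ + u - 1) + (ℓ + u - (t + w - r) % 2) * (c - e) := by
    have hmod : (t + w - r) % 2 = 1 - n % 2 := by omega
    rw [hmod]
    ring
  have hℓ : -u - y - e + c + n = t := by omega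
  have hr : 2 * m + 3 - 2 * lmd - 5 * u - 3 * ℓ - 2 * y - e + c + n = w + t - ℓ := by omega
  have hc : m - lmd - 2 * u - ℓ - y + c + 1 + n / 2 = u - 1 + (t + w - r + 1) / 2 := by omega
  have he : m + 1 - lmd - 2 * ℓ - y - 3 * u + (n + 1) / 2 + c = (t + w - r) / 2 - ℓ := by omega
  simp only [SpSummand, TSummand, hsign, hexp, hℓ, hr, hc, he, neg_mul, neg_neg]

theorem sum_SpSummand_eq_neg_sum_TSummand {m y u ℓ c e r : ℕ} (lmd : ℤ) (hu : c + e + r = u)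
    (h : ℓ + y + 2 * u ≤ 2 * m + 1) :
    ∑ n ∈ range (2 * m + 2), SpSummand m lmd y u ℓ c e r n =
      -∑ t ∈ range (ℓ + 1),
        TSummand (2 * (m : ℤ) + 3 - 2 * lmd - 2 * ℓ - 4 * u - y) u ℓ c e r t := by
  have hk : (u : ℤ) + y + e - c = (u + y + e - c : ℕ) := by omega
  simp only [SpSummand_eq_neg_TSummand m lmd y ℓ _ (by omega : (c : ℤ) + e + r = u),
    sum_neg_distrib, hk]
  refine congrArg _ (sum_range_sub_eq_sum_range (by omega) fun t ht => ?_)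
  refine TSummand_eq_zero _ _ _ _ _ fun ht' => ht ?_
  rw [Set.mem_Icc] at ht'
  rw [Set.mem_Ico]
  omega

/-- `S'(y,u,ℓ,λ) = −T(2m+3−2λ−2ℓ−4u−y, u, ℓ)` for `ℓ + y + 2u ≤ 2m + 1`. -/
theorem Sp_eq_negT (m : ℕ) (lmd : ℤ) (y u ℓ : ℕ) (h : ℓ + y + 2 * u ≤ 2 * m + 1) :
    Sp m lmd y u ℓ
      = -T (2 * (m : ℤ) + 3 - 2 * lmd - 2 * (ℓ : ℤ) - 4 * (u : ℤ) - (y : ℤ)) u ℓ := by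
  simp only [Sp_eq_sum_SpSummand, T_eq_sum_TSummand, ← sum_neg_distrib]
  refine sum_congr rfl fun c hc => sum_congr rfl fun e he => ?_
  have hu : c + e + (u - c - e) = u := by
    rw [mem_range] at hc he
    omega
  rw [sum_SpSummand_eq_neg_sum_TSummand lmd hu h, sum_neg_distrib]

end
end
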